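/- Every f₄ ∈ Y_{n₁,n₂,n₃} can be represented in the normalized form f₄(t) = c^(4)·t + b^(4) + A^(4)·σ( A^(3)·σ( A^(2)·σ(t·𝟙 + b^(1)) + t·s^(2) + b^(2) ) + t·s^(3) + b^(3) ) with sign vectors s^(2) ∈ {−1, 0, 1}^{n₂} and s^(3) ∈ {−1, 0, 1}^{n₃}, 𝟙 = (1, …, 1)ᵀ ∈ ℝ^{n₁}, and n₁ + (n₁+1)·n₂ + (n₂+1)·n₃ + n₃ + 2 real parameters c^(4), b^(4), A^(4) ∈ ℝ^{1×n₃}, A^(3) ∈ ℝ^{n₃×n₂}, A^(2) ∈ ℝ^{n₂×n₁}, b^(1) ∈ ℝ^{n₁}, b^(2) ∈ ℝ^{n₂}, b^(3) ∈ ℝ^{n₃}. Moreover, these real parameters are independent: for any one of them, the class of functions representable with that parameter fixed to be zero is a proper subset of Y_{n₁,n₂,n₃}. -/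

import Mathlib

/-- The ReLU function `σ(x) = max(x,0)`. -/
noncomputable def relu (x : ℝ) : ℝ := max x 0

/-- `f` belongs to the three-hidden-layer ReLU network class `Y_{n₁,n₂,n₃}`. -/
def IsReLU3 (n1 n2 n3 : ℕ) (f : ℝ → ℝ) : Prop :=
  ∃ (a1 b1 : Fin n1 → ℝ) (a2 : Fin n2 → Fin n1 → ℝ) (c2 b2 : Fin n2 → ℝ)
    (a3 : Fin n3 → Fin n2 → ℝ) (c3 b3 : Fin n3 → ℝ) (a4 : Fin n3 → ℝ) (c4 b4 : ℝ),
    ∀ t, f t = c4 * t + b4 +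
      ∑ r, a4 r * relu
        ((∑ j, a3 r j * relu ((∑ k, a2 j k * relu (a1 k * t + b1 k)) + c2 j * t + b2 j))
          + c3 r * t + b3 r)

/-- Parameters of the normalized three-hidden-layer model: the
`n₁ + (n₁+1)n₂ + (n₂+1)n₃ + n₃ + 2` real parameters `c⁴, b⁴, A⁴, A³, A², b¹, b², b³`
together with the sign vectors `s², s³`. -/
structure NParams3 (n1 n2 n3 : ℕ) where
  c4 : ℝ
  b4 : ℝ
  a4 : Fin n3 → ℝ
  a3 : Fin n3 → Fin n2 → ℝ
  a2 : Fin n2 → Fin n1 → ℝ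
  b1 : Fin n1 → ℝ
  b2 : Fin n2 → ℝ
  b3 : Fin n3 → ℝ
  s2 : Fin n2 → ℝ
  s3 : Fin n3 → ℝ

/-- `s²` and `s³` are sign vectors. -/
def NParams3.valid {n1 n2 n3 : ℕ} (p : NParams3 n1 n2 n3) : Prop :=
  (∀ j, p.s2 j = -1 ∨ p.s2 j = 0 ∨ p.s2 j = 1) ∧
  (∀ r, p.s3 r = -1 ∨ p.s3 r = 0 ∨ p.s3 r = 1)

/-- The function realized by the normalized parameters:
`t ↦ c⁴·t + b⁴ + A⁴·σ(A³·σ(A²·σ(t·𝟙 + b¹) + t·s² + b²) + t·s³ + b³)`. -/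
noncomputable def NParams3.fn {n1 n2 n3 : ℕ} (p : NParams3 n1 n2 n3) : ℝ → ℝ :=
  fun t => p.c4 * t + p.b4 +
    ∑ r, p.a4 r * relu
      ((∑ j, p.a3 r j * relu ((∑ k, p.a2 j k * relu (t + p.b1 k)) + p.s2 j * t + p.b2 j))
        + p.s3 r * t + p.b3 r)

/-- Index type enumerating the real parameters of the normalized model. -/
inductive PIdx3 (n1 n2 n3 : ℕ) where
  | c4 : PIdx3 n1 n2 n3
  | b4 : PIdx3 n1 n2 n3
  | a4 (r : Fin n3) : PIdx3 n1 n2 n3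
  | a3 (r : Fin n3) (j : Fin n2) : PIdx3 n1 n2 n3
  | a2 (j : Fin n2) (k : Fin n1) : PIdx3 n1 n2 n3
  | b1 (k : Fin n1) : PIdx3 n1 n2 n3
  | b2 (j : Fin n2) : PIdx3 n1 n2 n3
  | b3 (r : Fin n3) : PIdx3 n1 n2 n3

/-- Read off the real parameter with the given index. -/
def NParams3.get {n1 n2 n3 : ℕ} (p : NParams3 n1 n2 n3) : PIdx3 n1 n2 n3 → ℝ
  | .c4 => p.c4
  | .b4 => p.b4
  | .a4 r => p.a4 r
  | .a3 r j => p.a3 r j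
  | .a2 j k => p.a2 j k
  | .b1 k => p.b1 k
  | .b2 j => p.b2 j
  | .b3 r => p.b3 r

open Cardinal in
theorem exists_algInd (ι : Type) [Finite ι] : ∃ x : ι → ℝ, AlgebraicIndependent ℚ x := by
  obtain ⟨s, hs⟩ := exists_isTranscendenceBasis ℚ ℝ
  have hinf : Infinite s := by
    by_contra hfin
    have : Finite s := not_infinite_iff_finite.mp hfin
    have halg := hs.isAlgebraic
    rw [Subtype.range_coe] at halg
    have h1 := Algebra.IsAlgebraic.cardinalMk_le_max (Algebra.adjoin ℚ s) ℝ
    have h2 : Cardinal.mk (Algebra.adjoin ℚ s) ≤ ℵ₀ := by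
      have := (hs.1.aevalEquiv).toEquiv
      rw [Subtype.range_coe] at this
      rw [← Cardinal.mk_congr this]
      refine MvPolynomial.cardinalMk_le_max.trans ?_
      simp
    rw [max_eq_right h2, Cardinal.mk_real] at h1
    exact absurd h1 (not_le.mpr Cardinal.aleph0_lt_continuum)
  obtain ⟨e⟩ : Nonempty (ι ↪ s) := by
    have := Fintype.ofFinite ι
    exact ⟨(Fintype.equivFin ι).toEmbedding.trans (Fin.valEmbedding.trans (Infinite.natEmbedding s))⟩
  exact ⟨_, hs.1.comp e e.injective⟩

theorem card_le_of_mem_adjoin {ι κ : Type} [Fintype ι] [Fintype κ] (x : ι → ℝ)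
    (hx : AlgebraicIndependent ℚ x) (y : κ → ℝ)
    (h : ∀ i, x i ∈ IntermediateField.adjoin ℚ (Set.range y)) : Fintype.card ι ≤ Fintype.card κ := by
  have hsub : Set.range x ⊆ (AlgebraicIndependent.matroid ℚ ℝ).closure (Set.range y) := by
    rw [AlgebraicIndependent.matroid_closure_eq]
    rintro _ ⟨i, rfl⟩
    rw [SetLike.mem_coe, Subalgebra.mem_algebraicClosure]
    refine IntermediateField.adjoin_induction ℚ (p := fun z _ => IsAlgebraic (Algebra.adjoin ℚ (Set.range y)) z) ?_ ?_ ?_ ?_ ?_ (h i)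
    · intro z hz
      exact isAlgebraic_algebraMap (⟨z, Algebra.subset_adjoin hz⟩ : Algebra.adjoin ℚ (Set.range y))
    · intro q
      exact isAlgebraic_algebraMap (algebraMap ℚ (Algebra.adjoin ℚ (Set.range y)) q)
    · intro a b _ _ ha hb; exact ha.add hb
    · intro a _ ha; exact ha.inv
    · intro a b _ _ ha hb; exact ha.mul hb
  have hind : (AlgebraicIndependent.matroid ℚ ℝ).Indep (Set.range x) := by
    rw [AlgebraicIndependent.matroid_indep_iff]
    exact hx.coe_range
  have h1 := hind.encard_le_eRk_of_subset hsub
  rw [Matroid.eRk_closure_eq] at h1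
  have h2 := h1.trans (Matroid.eRk_le_encard _ _)
  rw [← Set.image_univ, hx.injective.encard_image] at h2
  have h3 : (Set.range y).encard ≤ (Set.univ : Set κ).encard := by
    rw [← Set.image_univ]; exact Set.encard_image_le _ _
  have h4 := h2.trans h3
  simp only [Set.encard_univ, ENat.card_eq_coe_fintype_card] at h4
  exact_mod_cast h4

theorem relu_of_nonneg {x : ℝ} (h : 0 ≤ x) : relu x = x := max_eq_left h
theorem relu_of_nonpos {x : ℝ} (h : x ≤ 0) : relu x = 0 := max_eq_right h
theorem relu_mul {m : ℝ} (hm : 0 ≤ m) (x : ℝ) : relu (m * x) = m * relu x := by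
  unfold relu
  rw [mul_max_of_nonneg _ _ hm, mul_zero]
theorem relu_neg (x : ℝ) : relu (-x) = relu x - x := by
  rcases le_total 0 x with h | h
  · rw [relu_of_nonneg h, relu_of_nonpos (by linarith)]; ring
  · rw [relu_of_nonpos h, relu_of_nonneg (by linarith)]; ring
theorem continuous_relu : Continuous relu := by
  unfold relu; fun_prop

/-- Normalizing a single first-layer unit. -/
theorem relu_unit (a b : ℝ) : ∃ α β γ δ : ℝ, ∀ t, relu (a * t + b) = α * relu (t + β) + γ * t + δ := by
  rcases lt_trichotomy a 0 with h | h | h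
  · refine ⟨-a, b / a, a, b, fun t => ?_⟩
    have hb : a * (b / a) = b := mul_div_cancel₀ b h.ne
    have : a * t + b = -((-a) * (t + b / a)) := by linear_combination -hb
    rw [this, relu_neg, relu_mul (by linarith)]
    linear_combination hb
  · refine ⟨0, 0, 0, relu b, fun t => ?_⟩
    subst h; simp
  · refine ⟨a, b / a, 0, 0, fun t => ?_⟩
    have : a * t + b = a * (t + b / a) := by field_simp
    rw [this, relu_mul h.le]; ring

theorem sign_split (c : ℝ) : ∃ m s : ℝ, 0 < m ∧ (s = -1 ∨ s = 0 ∨ s = 1) ∧ c = m * s := by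
  rcases lt_trichotomy c 0 with h | h | h
  · exact ⟨-c, -1, by linarith, by simp, by ring⟩
  · exact ⟨1, 0, by norm_num, by simp, by simp [h]⟩
  · exact ⟨c, 1, h, by simp, by ring⟩

theorem part_one (n1 n2 n3 : ℕ) (f : ℝ → ℝ) (hf : IsReLU3 n1 n2 n3 f) :
    ∃ p : NParams3 n1 n2 n3, p.valid ∧ ∀ t, f t = p.fn t := by
  obtain ⟨a1, b1, a2, c2, b2, a3, c3, b3, a4, c4, b4, hf⟩ := hf
  choose α β γ δ h1 using fun k => relu_unit (a1 k) (b1 k)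
  choose m s hm hs hc using fun j => sign_split (c2 j + ∑ k, a2 j k * γ k)
  choose m' s' hm' hs' hc' using fun r => sign_split (c3 r)
  have hg : ∀ j t, relu ((∑ k, a2 j k * relu (a1 k * t + b1 k)) + c2 j * t + b2 j) =
      m j * relu ((∑ k, (a2 j k * α k / m j) * relu (t + β k)) + s j * t +
        (b2 j + ∑ k, a2 j k * δ k) / m j) := by
    intro j t
    rw [← relu_mul (hm j).le]
    congr 1
    have e1 : ∑ k, a2 j k * relu (a1 k * t + b1 k) =
        ∑ k, a2 j k * α k * relu (t + β k) + (∑ k, a2 j k * γ k) * t + ∑ k, a2 j k * δ k := by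
      rw [Finset.sum_mul, ← Finset.sum_add_distrib, ← Finset.sum_add_distrib]
      exact Finset.sum_congr rfl fun k _ => by rw [h1]; ring
    have e2 : m j * ∑ k, (a2 j k * α k / m j) * relu (t + β k) =
        ∑ k, a2 j k * α k * relu (t + β k) := by
      rw [Finset.mul_sum]
      exact Finset.sum_congr rfl fun k _ => by have := (hm j).ne'; field_simp
    have e3 : m j * ((b2 j + ∑ k, a2 j k * δ k) / m j) = b2 j + ∑ k, a2 j k * δ k := by
      have := (hm j).ne'; field_simp
    rw [mul_add, mul_add, e2, e3, e1, ← mul_assoc, ← hc]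
    ring
  refine ⟨⟨c4, b4, fun r => a4 r * m' r, fun r j => a3 r j * m j / m' r,
    fun j k => a2 j k * α k / m j, β, fun j => (b2 j + ∑ k, a2 j k * δ k) / m j,
    fun r => b3 r / m' r, s, s'⟩, ⟨hs, hs'⟩, fun t => ?_⟩
  rw [hf]
  unfold NParams3.fn
  congr 1
  refine Finset.sum_congr rfl fun r _ => ?_
  simp only
  rw [mul_assoc, ← relu_mul (hm' r).le]
  congr 2
  have e2 : m' r * ∑ j, (a3 r j * m j / m' r) * relu ((∑ k, (a2 j k * α k / m j) * relu (t + β k)) + s j * t +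
        (b2 j + ∑ k, a2 j k * δ k) / m j) = ∑ j, a3 r j * relu ((∑ k, a2 j k * relu (a1 k * t + b1 k)) + c2 j * t + b2 j) := by
    rw [Finset.mul_sum]
    refine Finset.sum_congr rfl fun j _ => ?_
    rw [hg]
    have := (hm' r).ne'
    field_simp
  have e3 : m' r * (b3 r / m' r) = b3 r := by
    have := (hm' r).ne'; field_simp
  rw [mul_add, mul_add, e2, e3, ← mul_assoc, ← hc']

theorem fn_isReLU3 {n1 n2 n3 : ℕ} (p : NParams3 n1 n2 n3) : IsReLU3 n1 n2 n3 p.fn :=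
  ⟨fun _ => 1, p.b1, p.a2, p.s2, p.b2, p.a3, p.s3, p.b3, p.a4, p.c4, p.b4, fun t => by
    simp only [one_mul]; rfl⟩

/-- Values of a normalized network at rational points lie in any field containing the parameters. -/
theorem relu_mem (K : IntermediateField ℚ ℝ) {x : ℝ} (h : x ∈ K) : relu x ∈ K := by
  rcases le_total 0 x with h' | h'
  · rwa [relu_of_nonneg h']
  · rw [relu_of_nonpos h']; exact zero_mem K

theorem fn_mem {n1 n2 n3 : ℕ} (p : NParams3 n1 n2 n3) (hp : p.valid) (K : IntermediateField ℚ ℝ)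
    (h : ∀ i, p.get i ∈ K) (q : ℚ) : p.fn q ∈ K := by
  have hq : (q : ℝ) ∈ K := K.algebraMap_mem q
  have hsgn : ∀ s : ℝ, (s = -1 ∨ s = 0 ∨ s = 1) → s ∈ K := by
    rintro s (rfl | rfl | rfl)
    · exact neg_mem (one_mem K)
    · exact zero_mem K
    · exact one_mem K
  unfold NParams3.fn
  refine add_mem (add_mem (mul_mem (h .c4) hq) (h .b4)) (sum_mem fun r _ => mul_mem (h (.a4 r)) (relu_mem K ?_))
  refine add_mem (add_mem (sum_mem fun j _ => mul_mem (h (.a3 r j)) (relu_mem K ?_)) (mul_mem (hsgn _ (hp.2 r)) hq)) (h (.b3 r))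
  refine add_mem (add_mem (sum_mem fun k _ => mul_mem (h (.a2 j k)) (relu_mem K ?_)) (mul_mem (hsgn _ (hp.1 j)) hq)) (h (.b2 j))
  exact add_mem hq (h (.b1 k))

/-! ### Networks with sign vectors `s² = -1`, `s³ = 1` -/

/-- Second-layer preactivation. -/
noncomputable def gg {n1 n2 n3 : ℕ} (v : PIdx3 n1 n2 n3 → ℝ) (j : Fin n2) (t : ℝ) : ℝ :=
  (∑ k, v (.a2 j k) * relu (t + v (.b1 k))) + (-1) * t + v (.b2 j)

/-- Third-layer preactivation. -/
noncomputable def hh {n1 n2 n3 : ℕ} (v : PIdx3 n1 n2 n3 → ℝ) (r : Fin n3) (t : ℝ) : ℝ :=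
  (∑ j, v (.a3 r j) * relu (gg v j t)) + 1 * t + v (.b3 r)

/-- The network. -/
noncomputable def ff {n1 n2 n3 : ℕ} (v : PIdx3 n1 n2 n3 → ℝ) (t : ℝ) : ℝ :=
  v .c4 * t + v .b4 + ∑ r, v (.a4 r) * relu (hh v r t)

theorem ff_isReLU3 {n1 n2 n3 : ℕ} (v : PIdx3 n1 n2 n3 → ℝ) : IsReLU3 n1 n2 n3 (ff v) :=
  fn_isReLU3 ⟨v .c4, v .b4, fun r => v (.a4 r), fun r j => v (.a3 r j), fun j k => v (.a2 j k),
    fun k => v (.b1 k), fun j => v (.b2 j), fun r => v (.b3 r), fun _ => -1, fun _ => 1⟩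

/-- `x` has the sign prescribed by `e`. -/
def Sg (e : Prop) (x : ℝ) : Prop := (e → 0 < x) ∧ (¬ e → x < 0)

open Classical in
theorem Sg.relu {e : Prop} {x : ℝ} (h : Sg e x) : relu x = if e then x else 0 := by
  split_ifs with he
  · exact relu_of_nonneg (h.1 he).le
  · exact relu_of_nonpos (h.2 he).le

/-- The activation pattern at `τ` is `(e1, e2, e3)`. -/
def Pat {n1 n2 n3 : ℕ} (v : PIdx3 n1 n2 n3 → ℝ) (e1 : Fin n1 → Prop) (e2 : Fin n2 → Prop)
    (e3 : Fin n3 → Prop) (τ : ℝ) : Prop :=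
  (∀ k, Sg (e1 k) (τ + v (.b1 k))) ∧ (∀ j, Sg (e2 j) (gg v j τ)) ∧ (∀ r, Sg (e3 r) (hh v r τ))

/-- Event: the unit `r` of the third layer changes sign, while units `j < i` of layer two are
active. -/
def HEv {n1 n2 n3 : ℕ} (v : PIdx3 n1 n2 n3 → ℝ) (r : Fin n3) (i : ℕ) (e : Fin n3 → Prop)
    (τ₁ τ₂ τ₃ τ₄ : ℚ) : Prop :=
  τ₁ < τ₂ ∧ τ₃ < τ₄ ∧
  (∀ τ : ℚ, τ = τ₁ ∨ τ = τ₂ →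
    Pat v (fun _ => False) (fun j => (j : ℕ) < i) (Function.update e r False) τ) ∧
  (∀ τ : ℚ, τ = τ₃ ∨ τ = τ₄ →
    Pat v (fun _ => False) (fun j => (j : ℕ) < i) (Function.update e r True) τ)

/-- Event: the unit `j` of the second layer changes sign, while units `k' ≤ k` of layer one and
all units of layer three are active. -/
def GEv {n1 n2 n3 : ℕ} (v : PIdx3 n1 n2 n3 → ℝ) (j : Fin n2) (k : Fin n1) (e : Fin n2 → Prop)
    (τ₁ τ₂ τ₃ τ₄ : ℚ) : Prop :=
  τ₁ < τ₂ ∧ τ₃ < τ₄ ∧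
  (∀ τ : ℚ, τ = τ₁ ∨ τ = τ₂ →
    Pat v (fun k' => k' ≤ k) (Function.update e j False) (fun _ => True) τ) ∧
  (∀ τ : ℚ, τ = τ₃ ∨ τ = τ₄ →
    Pat v (fun k' => k' ≤ k) (Function.update e j True) (fun _ => True) τ)

/-- The open conditions under which all parameters can be recovered. -/
structure Good {n1 n2 n3 : ℕ} (v : PIdx3 n1 n2 n3 → ℝ) : Prop where
  a4 : ∀ r, v (.a4 r) ≠ 0
  a3 : ∀ r j, v (.a3 r j) ≠ 0
  a2 : ∀ j k, v (.a2 j k) ≠ 0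
  w : ∀ j, ∑ r, v (.a4 r) * v (.a3 r j) ≠ 0
  hev : ∀ r, ∀ i : Fin (n2 + 1), ∃ e τ₁ τ₂ τ₃ τ₄, HEv v r i e τ₁ τ₂ τ₃ τ₄
  gev : ∀ j k, ∃ e τ₁ τ₂ τ₃ τ₄, GEv v j k e τ₁ τ₂ τ₃ τ₄

theorem affine_mem (K : IntermediateField ℚ ℝ) {A B : ℝ} {τ₁ τ₂ : ℚ} (h : τ₁ < τ₂)
    (h1 : A * τ₁ + B ∈ K) (h2 : A * τ₂ + B ∈ K) : A ∈ K ∧ B ∈ K := by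
  have hq : ∀ q : ℚ, (q : ℝ) ∈ K := fun q => K.algebraMap_mem q
  have hne : ((τ₂ : ℝ) - τ₁) ≠ 0 := by
    have : (τ₁ : ℝ) < τ₂ := by exact_mod_cast h
    linarith
  have hA : A ∈ K := by
    have e : A = ((A * τ₂ + B) - (A * τ₁ + B)) / (τ₂ - τ₁) := by field_simp; ring
    rw [e]
    exact div_mem (sub_mem h2 h1) (sub_mem (hq _) (hq _))
  refine ⟨hA, ?_⟩
  have e : B = (A * τ₁ + B) - A * τ₁ := by ring
  rw [e]
  exact sub_mem h1 (mul_mem hA (hq _))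

theorem kink_mem (K : IntermediateField ℚ ℝ) (f L : ℝ → ℝ) (hf : ∀ q : ℚ, f q ∈ K)
    (hL : ∃ A B : ℝ, ∀ t, L t = A * t + B) {M N : ℝ} {τ₁ τ₂ τ₃ τ₄ : ℚ}
    (h12 : τ₁ < τ₂) (h34 : τ₃ < τ₄)
    (hl : ∀ τ : ℚ, τ = τ₁ ∨ τ = τ₂ → f τ = L τ)
    (hr : ∀ τ : ℚ, τ = τ₃ ∨ τ = τ₄ → f τ = L τ + (M * τ + N)) : M ∈ K ∧ N ∈ K := by
  obtain ⟨A, B, hL⟩ := hL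
  have h1 := affine_mem K (A := A) (B := B) h12
    (by rw [← hL, ← hl _ (.inl rfl)]; exact hf _) (by rw [← hL, ← hl _ (.inr rfl)]; exact hf _)
  have h2 := affine_mem K (A := A + M) (B := B + N) h34
    (by
      have : (A + M) * (τ₃ : ℝ) + (B + N) = f τ₃ := by rw [hr _ (.inl rfl), hL]; ring
      rw [this]; exact hf _)
    (by
      have : (A + M) * (τ₄ : ℝ) + (B + N) = f τ₄ := by rw [hr _ (.inr rfl), hL]; ring
      rw [this]; exact hf _)
  constructor
  · have := sub_mem h2.1 h1.1; rwa [add_sub_cancel_left] at this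
  · have := sub_mem h2.2 h1.2; rwa [add_sub_cancel_left] at this

/-- Affine functions. -/
def Aff (L : ℝ → ℝ) : Prop := ∃ A B : ℝ, ∀ t, L t = A * t + B

theorem Aff.lin (A B : ℝ) : Aff (fun t => A * t + B) := ⟨A, B, fun _ => rfl⟩
theorem Aff.add {L M : ℝ → ℝ} (h : Aff L) (h' : Aff M) : Aff (fun t => L t + M t) := by
  obtain ⟨A, B, h⟩ := h
  obtain ⟨C, D, h'⟩ := h'
  exact ⟨A + C, B + D, fun t => by simp only [h, h']; ring⟩
theorem Aff.mul {L : ℝ → ℝ} (c : ℝ) (h : Aff L) : Aff (fun t => c * L t) := by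
  obtain ⟨A, B, h⟩ := h
  exact ⟨c * A, c * B, fun t => by simp only [h]; ring⟩
theorem Aff.sum {ι : Type} [Fintype ι] {L : ι → ℝ → ℝ} (h : ∀ i, Aff (L i)) :
    Aff (fun t => ∑ i, L i t) := by
  choose A B h using h
  refine ⟨∑ i, A i, ∑ i, B i, fun t => ?_⟩
  rw [Finset.sum_mul, ← Finset.sum_add_distrib]
  exact Finset.sum_congr rfl fun i _ => h i t
open Classical in
theorem Aff.ite {L : ℝ → ℝ} (e : Prop) (h : Aff L) : Aff (fun t => if e then L t else 0) := by
  by_cases he : e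
  · simpa [he] using h
  · exact ⟨0, 0, fun t => by simp [he]⟩

open Classical in
theorem sum_update_true {ι : Type} [Fintype ι] [DecidableEq ι] (e : ι → Prop) (i : ι) (c y : ι → ℝ) :
    ∑ j, c j * (if Function.update e i True j then y j else 0) =
      ∑ j, c j * (if Function.update e i False j then y j else 0) + c i * y i := by
  rw [← Finset.add_sum_erase _ _ (Finset.mem_univ i), ← Finset.add_sum_erase _ _ (Finset.mem_univ i)]
  have : ∑ j ∈ Finset.univ.erase i, c j * (if Function.update e i True j then y j else 0) =
      ∑ j ∈ Finset.univ.erase i, c j * (if Function.update e i False j then y j else 0) := by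
    refine Finset.sum_congr rfl fun j hj => ?_
    have hj : j ≠ i := Finset.ne_of_mem_erase hj
    simp [Function.update_of_ne hj]
  rw [this]
  simp
  ring

/-- Recovering a sequence from its initial sums. -/
theorem mem_of_initial {n : ℕ} (K : IntermediateField ℚ ℝ) (x : Fin n → ℝ)
    (h : ∀ i : Fin (n + 1), ∑ j : Fin n, (if (j : ℕ) < i then x j else 0) ∈ K) (j : Fin n) : x j ∈ K := by
  have h1 := h j.succ
  have h2 := h j.castSucc
  have e : x j = ∑ j' : Fin n, (if (j' : ℕ) < j.succ then x j' else 0) -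
      ∑ j' : Fin n, (if (j' : ℕ) < j.castSucc then x j' else 0) := by
    rw [← Finset.sum_sub_distrib, Finset.sum_eq_single j]
    · simp
    · intro b _ hb
      have : (b : ℕ) ≠ j := fun h => hb (Fin.ext h)
      simp only [Fin.val_succ, Fin.val_castSucc]
      by_cases h' : (b : ℕ) < j
      · rw [if_pos (by omega), if_pos h', sub_self]
      · rw [if_neg (by omega), if_neg h', sub_self]
    · simp
  rw [e]
  exact sub_mem h1 h2

section recover
variable {n1 n2 n3 : ℕ} {v : PIdx3 n1 n2 n3 → ℝ} {K : IntermediateField ℚ ℝ}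

theorem hh_hev (r : Fin n3) {i : ℕ} {e3 : Fin n3 → Prop} {τ : ℝ}
    (h : Pat v (fun _ => False) (fun j => (j : ℕ) < i) e3 τ) :
    hh v r τ = (1 - ∑ j : Fin n2, (if (j : ℕ) < i then v (.a3 r j) else 0)) * τ +
      (v (.b3 r) + ∑ j : Fin n2, (if (j : ℕ) < i then v (.a3 r j) * v (.b2 j) else 0)) := by
  have hg : ∀ j, gg v j τ = -τ + v (.b2 j) := by
    intro j
    unfold gg
    rw [Finset.sum_eq_zero]
    · ring
    · intro k _
      rw [(h.1 k).relu]; simp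
  unfold hh
  have : ∑ j, v (.a3 r j) * relu (gg v j τ) =
      -(∑ j : Fin n2, (if (j : ℕ) < i then v (.a3 r j) else 0)) * τ +
       ∑ j : Fin n2, (if (j : ℕ) < i then v (.a3 r j) * v (.b2 j) else 0) := by
    rw [← Finset.sum_neg_distrib, Finset.sum_mul, ← Finset.sum_add_distrib]
    refine Finset.sum_congr rfl fun j _ => ?_
    rw [(h.2.1 j).relu, hg]
    split_ifs <;> ring
  rw [this]; ring

theorem recover_h (hf : ∀ q : ℚ, ff v q ∈ K) {r : Fin n3} {i : ℕ} {e : Fin n3 → Prop}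
    {τ₁ τ₂ τ₃ τ₄ : ℚ} (h : HEv v r i e τ₁ τ₂ τ₃ τ₄) :
    v (.a4 r) * (1 - ∑ j : Fin n2, (if (j : ℕ) < i then v (.a3 r j) else 0)) ∈ K ∧
    v (.a4 r) * (v (.b3 r) + ∑ j : Fin n2, (if (j : ℕ) < i then v (.a3 r j) * v (.b2 j) else 0)) ∈ K := by
  classical
  obtain ⟨h12, h34, hl, hr⟩ := h
  let y : Fin n3 → ℝ → ℝ := fun r τ =>
    (1 - ∑ j : Fin n2, (if (j : ℕ) < i then v (.a3 r j) else 0)) * τ +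
      (v (.b3 r) + ∑ j : Fin n2, (if (j : ℕ) < i then v (.a3 r j) * v (.b2 j) else 0))
  have hff : ∀ e3 (τ : ℝ), Pat v (fun _ => False) (fun j => (j : ℕ) < i) e3 τ →
      ff v τ = v .c4 * τ + v .b4 + ∑ r, v (.a4 r) * (if e3 r then y r τ else 0) := by
    intro e3 τ hP
    unfold ff
    congr 1
    refine Finset.sum_congr rfl fun r _ => ?_
    rw [(hP.2.2 r).relu, hh_hev r hP]
  refine kink_mem K (ff v) (fun τ => v .c4 * τ + v .b4 +
    ∑ r', v (.a4 r') * (if Function.update e r False r' then y r' τ else 0)) hf ?_ h12 h34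
    (fun τ hτ => hff _ _ (hl τ hτ)) (fun τ hτ => ?_)
  · exact (Aff.lin _ _).add (Aff.sum fun r' => Aff.mul _ (Aff.ite _ (Aff.lin _ _)))
  · rw [hff _ _ (hr τ hτ), sum_update_true e r (fun r => v (.a4 r)) (fun r => y r τ)]
    simp only [y]
    ring

theorem recover_g (hf : ∀ q : ℚ, ff v q ∈ K) {j : Fin n2} {k : Fin n1} {e : Fin n2 → Prop}
    {τ₁ τ₂ τ₃ τ₄ : ℚ} (h : GEv v j k e τ₁ τ₂ τ₃ τ₄) :
    (∑ r, v (.a4 r) * v (.a3 r j)) * (∑ k' : Fin n1, (if k' ≤ k then v (.a2 j k') else 0) - 1) ∈ K ∧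
    (∑ r, v (.a4 r) * v (.a3 r j)) *
      (∑ k' : Fin n1, (if k' ≤ k then v (.a2 j k') * v (.b1 k') else 0) + v (.b2 j)) ∈ K := by
  classical
  obtain ⟨h12, h34, hl, hr⟩ := h
  let y : Fin n2 → ℝ → ℝ := fun j τ =>
    (∑ k' : Fin n1, (if k' ≤ k then v (.a2 j k') else 0) - 1) * τ +
      (∑ k' : Fin n1, (if k' ≤ k then v (.a2 j k') * v (.b1 k') else 0) + v (.b2 j))
  have hg : ∀ e2 (τ : ℝ), Pat v (fun k' => k' ≤ k) e2 (fun _ => True) τ → ∀ j, gg v j τ = y j τ := by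
    intro e2 τ hP j
    unfold gg
    have : ∑ k', v (.a2 j k') * relu (τ + v (.b1 k')) =
        (∑ k' : Fin n1, (if k' ≤ k then v (.a2 j k') else 0)) * τ +
        ∑ k' : Fin n1, (if k' ≤ k then v (.a2 j k') * v (.b1 k') else 0) := by
      rw [Finset.sum_mul, ← Finset.sum_add_distrib]
      refine Finset.sum_congr rfl fun k' _ => ?_
      rw [(hP.1 k').relu]
      split_ifs <;> ring
    rw [this]
    simp only [y]
    ring
  have hff : ∀ e2 (τ : ℝ), Pat v (fun k' => k' ≤ k) e2 (fun _ => True) τ →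
      ff v τ = v .c4 * τ + v .b4 + ∑ r, v (.a4 r) *
        ((∑ j, v (.a3 r j) * (if e2 j then y j τ else 0)) + (1 * τ + v (.b3 r))) := by
    intro e2 τ hP
    unfold ff
    congr 1
    refine Finset.sum_congr rfl fun r _ => ?_
    rw [(hP.2.2 r).relu, if_pos trivial]
    unfold hh
    rw [add_assoc]
    congr 2
    refine Finset.sum_congr rfl fun j _ => ?_
    rw [(hP.2.1 j).relu, hg e2 τ hP]
  refine kink_mem K (ff v) (fun τ => v .c4 * τ + v .b4 + ∑ r, v (.a4 r) *
        ((∑ j', v (.a3 r j') * (if Function.update e j False j' then y j' τ else 0)) +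
          (1 * τ + v (.b3 r)))) hf ?_ h12 h34
    (fun τ hτ => hff _ _ (hl τ hτ)) (fun τ hτ => ?_)
  · exact (Aff.lin _ _).add (Aff.sum fun r => Aff.mul _ ((Aff.sum fun j' => Aff.mul _ (Aff.ite _ (Aff.lin _ _))).add (Aff.lin _ _)))
  · rw [hff _ _ (hr τ hτ), add_assoc (v .c4 * τ + v .b4)]
    congr 1
    have : ∀ r, v (.a4 r) * ((∑ j', v (.a3 r j') * (if Function.update e j True j' then y j' τ else 0)) +
          (1 * τ + v (.b3 r))) = v (.a4 r) *
        ((∑ j', v (.a3 r j') * (if Function.update e j False j' then y j' τ else 0)) +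
          (1 * τ + v (.b3 r))) + v (.a4 r) * v (.a3 r j) * y j τ := by
      intro r
      rw [sum_update_true e j (fun j => v (.a3 r j)) (fun j => y j τ)]
      ring
    rw [Finset.sum_congr rfl fun r _ => this r, Finset.sum_add_distrib, ← Finset.sum_mul]
    simp only [y]
    ring

theorem mem_of_mul_mem {a b : ℝ} (ha : a ∈ K) (h0 : a ≠ 0) (h : a * b ∈ K) : b ∈ K := by
  have : b = a * b / a := by field_simp
  rw [this]; exact div_mem h ha

theorem recover (hn2 : 1 ≤ n2) (hn3 : 1 ≤ n3) (hv : Good v) (hf : ∀ q : ℚ, ff v q ∈ K) : ∀ i, v i ∈ K := by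
  have hq : ∀ q : ℚ, (q : ℝ) ∈ K := fun q => K.algebraMap_mem q
  have H : ∀ r, ∀ i : Fin (n2 + 1),
      v (.a4 r) * (1 - ∑ j : Fin n2, (if (j : ℕ) < i then v (.a3 r j) else 0)) ∈ K ∧
      v (.a4 r) * (v (.b3 r) + ∑ j : Fin n2, (if (j : ℕ) < i then v (.a3 r j) * v (.b2 j) else 0)) ∈ K := by
    intro r i
    obtain ⟨e, τ₁, τ₂, τ₃, τ₄, h⟩ := hv.hev r i
    exact recover_h hf h
  have ha4 : ∀ r, v (.a4 r) ∈ K := fun r => by simpa using (H r 0).1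
  have hb3 : ∀ r, v (.b3 r) ∈ K := fun r =>
    mem_of_mul_mem (ha4 r) (hv.a4 r) (by simpa using (H r 0).2)
  have ha3 : ∀ r j, v (.a3 r j) ∈ K := fun r => mem_of_initial K _ fun i => by
    have := sub_mem (one_mem K) (mem_of_mul_mem (ha4 r) (hv.a4 r) (H r i).1)
    rwa [sub_sub_cancel] at this
  have hab : ∀ r j, v (.a3 r j) * v (.b2 j) ∈ K := fun r => mem_of_initial K _ fun i => by
    have := sub_mem (mem_of_mul_mem (ha4 r) (hv.a4 r) (H r i).2) (hb3 r)
    rwa [add_sub_cancel_left] at this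
  have hb2 : ∀ j, v (.b2 j) ∈ K := fun j =>
    mem_of_mul_mem (ha3 ⟨0, hn3⟩ j) (hv.a3 _ _) (hab _ j)
  have hcb : v .c4 ∈ K ∧ v .b4 ∈ K := by
    obtain ⟨e, τ₁, τ₂, τ₃, τ₄, h12, h34, hl, hr⟩ := hv.hev ⟨0, hn3⟩ 0
    have key : ∀ τ : ℚ, τ = τ₁ ∨ τ = τ₂ → v .c4 * τ + v .b4 ∈ K := by
      intro τ hτ
      have : v .c4 * τ + v .b4 = ff v τ - ∑ r, v (.a4 r) * relu (hh v r τ) := by unfold ff; ring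
      rw [this]
      refine sub_mem (hf _) (sum_mem fun r _ => mul_mem (ha4 r) (relu_mem K ?_))
      rw [hh_hev r (hl τ hτ)]
      simp only [Fin.val_zero, not_lt_zero, if_false, Finset.sum_const_zero]
      exact add_mem (mul_mem (sub_mem (one_mem K) (zero_mem K)) (hq _)) (add_mem (hb3 r) (zero_mem K))
    exact affine_mem K h12 (key _ (.inl rfl)) (key _ (.inr rfl))
  have hw : ∀ j, ∑ r, v (.a4 r) * v (.a3 r j) ∈ K := fun j =>
    sum_mem fun r _ => mul_mem (ha4 r) (ha3 r j)
  have hinit : ∀ x : Fin n1 → ℝ, (∀ k, ∑ k' : Fin n1, (if k' ≤ k then x k' else 0) ∈ K) → ∀ k, x k ∈ K := by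
    intro x hx
    refine mem_of_initial K x fun i => ?_
    induction i using Fin.cases with
    | zero => simp
    | succ k =>
      have e : ∑ k' : Fin n1, (if (k' : ℕ) < (k.succ : Fin (n1 + 1)) then x k' else 0) =
          ∑ k' : Fin n1, (if k' ≤ k then x k' else 0) :=
        Finset.sum_congr rfl fun k' _ => by
          simp only [Fin.val_succ, Nat.lt_succ_iff, Fin.le_def]
      rw [e]
      exact hx k
  have G : ∀ j k, (∑ k' : Fin n1, (if k' ≤ k then v (.a2 j k') else 0)) ∈ K ∧
      (∑ k' : Fin n1, (if k' ≤ k then v (.a2 j k') * v (.b1 k') else 0)) ∈ K := by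
    intro j k
    obtain ⟨e, τ₁, τ₂, τ₃, τ₄, h⟩ := hv.gev j k
    have h' := recover_g hf h
    constructor
    · have := add_mem (mem_of_mul_mem (hw j) (hv.w j) h'.1) (one_mem K)
      rwa [sub_add_cancel] at this
    · have := sub_mem (mem_of_mul_mem (hw j) (hv.w j) h'.2) (hb2 j)
      rwa [add_sub_cancel_right] at this
  have ha2 : ∀ j k, v (.a2 j k) ∈ K := fun j => hinit _ fun k => (G j k).1
  have hb1 : ∀ k, v (.b1 k) ∈ K := fun k =>
    mem_of_mul_mem (ha2 ⟨0, hn2⟩ k) (hv.a2 _ _) (hinit (fun k => v (.a2 ⟨0, hn2⟩ k) * v (.b1 k))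
      (fun k => (G _ k).2) k)
  intro i
  cases i with
  | c4 => exact hcb.1
  | b4 => exact hcb.2
  | a4 r => exact ha4 r
  | a3 r j => exact ha3 r j
  | a2 j k => exact ha2 j k
  | b1 k => exact hb1 k
  | b2 j => exact hb2 j
  | b3 r => exact hb3 r

end recover

/-! ### The base configuration -/

open Filter Topology

theorem Sg.eventually {X : Type*} [TopologicalSpace X] {F : X → ℝ} {e : Prop} {x : X}
    (hF : Continuous F) (h : Sg e (F x)) : ∀ᶠ y in 𝓝 x, Sg e (F y) := by
  by_cases he : e
  · filter_upwards [hF.continuousAt.eventually (lt_mem_nhds (h.1 he))] with y hy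
    exact ⟨fun _ => hy, fun h => absurd he h⟩
  · filter_upwards [hF.continuousAt.eventually (gt_mem_nhds (h.2 he))] with y hy
    exact ⟨fun h => absurd h he, fun _ => hy⟩

theorem gg_cont_v {n1 n2 n3 : ℕ} (j : Fin n2) (t : ℝ) :
    Continuous (fun v : PIdx3 n1 n2 n3 → ℝ => gg v j t) := by
  have := continuous_relu
  unfold gg; fun_prop

theorem hh_cont_v {n1 n2 n3 : ℕ} (r : Fin n3) (t : ℝ) :
    Continuous (fun v : PIdx3 n1 n2 n3 → ℝ => hh v r t) := by
  have := continuous_relu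
  have h := fun j => gg_cont_v (n1 := n1) (n3 := n3) (n2 := n2) j t
  unfold hh; fun_prop

theorem gg_cont {n1 n2 n3 : ℕ} (v : PIdx3 n1 n2 n3 → ℝ) (j : Fin n2) : Continuous (gg v j) := by
  have := continuous_relu
  unfold gg; fun_prop

theorem hh_cont {n1 n2 n3 : ℕ} (v : PIdx3 n1 n2 n3 → ℝ) (r : Fin n3) : Continuous (hh v r) := by
  have := continuous_relu
  have h := gg_cont v
  unfold hh; fun_prop

theorem Pat.eventually {n1 n2 n3 : ℕ} {v : PIdx3 n1 n2 n3 → ℝ} {e1 : Fin n1 → Prop}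
    {e2 : Fin n2 → Prop} {e3 : Fin n3 → Prop} {τ : ℝ} (h : Pat v e1 e2 e3 τ) :
    ∀ᶠ v' in 𝓝 v, Pat v' e1 e2 e3 τ := by
  refine Filter.Eventually.and ?_ (Filter.Eventually.and ?_ ?_)
  · exact eventually_all.2 fun k => Sg.eventually (F := fun v' : PIdx3 n1 n2 n3 → ℝ => τ + v' (.b1 k))
      (by fun_prop) (h.1 k)
  · exact eventually_all.2 fun j => Sg.eventually (gg_cont_v j τ) (h.2.1 j)
  · exact eventually_all.2 fun r => Sg.eventually (hh_cont_v r τ) (h.2.2 r)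

theorem exists_pair {P : ℝ → Prop} {a b : ℝ} (hab : a < b) (h : ∀ t, a < t → t < b → P t) :
    ∃ τ₁ τ₂ : ℚ, τ₁ < τ₂ ∧ ∀ τ : ℚ, τ = τ₁ ∨ τ = τ₂ → P τ := by
  obtain ⟨q, h1, h2⟩ := exists_rat_btwn hab
  obtain ⟨q', h3, h4⟩ := exists_rat_btwn h2
  refine ⟨q, q', by exact_mod_cast h3, ?_⟩
  rintro τ (rfl | rfl)
  · exact h _ h1 h2
  · exact h _ (h1.trans h3) h4

theorem ev_from {P0 P1 : ℝ → Prop} {z s : ℝ} (hs : s ≠ 0)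
    (N : ∀ᶠ t in 𝓝 z, (s * (t - z) < 0 → P0 t) ∧ (0 < s * (t - z) → P1 t)) :
    ∃ τ₁ τ₂ τ₃ τ₄ : ℚ, τ₁ < τ₂ ∧ τ₃ < τ₄ ∧ (∀ τ : ℚ, τ = τ₁ ∨ τ = τ₂ → P0 τ) ∧
      (∀ τ : ℚ, τ = τ₃ ∨ τ = τ₄ → P1 τ) := by
  obtain ⟨ε, hε, hN⟩ := Metric.eventually_nhds_iff.1 N
  have hN' : ∀ t, z - ε < t → t < z + ε →
      (s * (t - z) < 0 → P0 t) ∧ (0 < s * (t - z) → P1 t) := by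
    intro t h1 h2
    exact hN (by rw [Real.dist_eq, abs_lt]; constructor <;> linarith)
  rcases lt_or_gt_of_ne hs with hs | hs
  · obtain ⟨a, b, hab, h1⟩ := exists_pair (P := P0) (a := z) (b := z + ε) (by linarith)
      (fun t h1 h2 => (hN' t (by linarith) h2).1 (mul_neg_of_neg_of_pos hs (by linarith)))
    obtain ⟨c, d, hcd, h2⟩ := exists_pair (P := P1) (a := z - ε) (b := z) (by linarith)
      (fun t h1 h2 => (hN' t h1 (by linarith)).2 (mul_pos_of_neg_of_neg hs (by linarith)))
    exact ⟨a, b, c, d, hab, hcd, h1, h2⟩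
  · obtain ⟨a, b, hab, h1⟩ := exists_pair (P := P1) (a := z) (b := z + ε) (by linarith)
      (fun t h1 h2 => (hN' t (by linarith) h2).2 (mul_pos hs (by linarith)))
    obtain ⟨c, d, hcd, h2⟩ := exists_pair (P := P0) (a := z - ε) (b := z) (by linarith)
      (fun t h1 h2 => (hN' t h1 (by linarith)).1 (mul_neg_of_pos_of_neg hs (by linarith)))
    exact ⟨c, d, a, b, hcd, hab, h2, h1⟩

/-- Linear pieces of a triangular wave. -/
noncomputable def tri (i : ℕ) (x : ℝ) : ℝ := (-1) ^ i * (x - i) + (1 - (-1) ^ i) / 2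

theorem sum_tri (i : ℕ) (x : ℝ) :
    ∑ k ∈ Finset.range (i + 1), 2 * (-1 : ℝ) ^ k * (x - k) = x + tri i x := by
  induction i with
  | zero => simp [tri]; ring
  | succ i ih =>
    rw [Finset.sum_range_succ, ih]
    unfold tri
    push_cast
    ring

theorem sum_relu_tri (n i : ℕ) (hi : i < n) (x : ℝ) (h1 : (i : ℝ) ≤ x) (h2 : x ≤ i + 1) :
    ∑ k : Fin n, 2 * (-1 : ℝ) ^ (k : ℕ) * relu (x - (k : ℕ)) = x + tri i x := by
  rw [Fin.sum_univ_eq_sum_range (fun k => 2 * (-1 : ℝ) ^ k * relu (x - (k : ℕ))) n, ← sum_tri]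
  symm
  rw [← Finset.sum_subset (Finset.range_subset_range.2 (Nat.succ_le_of_lt hi))]
  · refine Finset.sum_congr rfl fun k hk => ?_
    have : (k : ℝ) ≤ i := by exact_mod_cast Nat.lt_succ_iff.1 (Finset.mem_range.1 hk)
    rw [relu_of_nonneg (by linarith)]
  · intro k _ hk
    have : i + 1 ≤ k := by simpa using hk
    have : (i : ℝ) + 1 ≤ k := by exact_mod_cast this
    rw [relu_of_nonpos (by linarith), mul_zero]

section base
variable {n1 n2 n3 : ℕ}

/-- Base parameters. -/
noncomputable def v0 (n1 n2 n3 : ℕ) : PIdx3 n1 n2 n3 → ℝ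
  | .c4 => 0
  | .b4 => 0
  | .a4 _ => 1
  | .a3 _ j => 2 * (-1) ^ (j : ℕ)
  | .a2 j k => (if (k : ℕ) = 0 then (1 - (4 + 2 * ((j : ℕ) : ℝ)) / (4 * (n2 : ℝ) + 4) : ℝ) else (0 : ℝ)) +
      2 * (-1) ^ (k : ℕ) * ((4 + 2 * (j : ℕ)) / (4 * n2 + 4))
  | .b1 k => -(3 + (k : ℕ) * (4 * n2 + 4))
  | .b2 j => -(2 * (j : ℕ))
  | .b3 r => -1 - (r : ℕ) / n3

theorem neg_one_pow_abs (i : ℕ) : |(-1 : ℝ) ^ i| = 1 := by simp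

/-- Layer two at the base point, left region. -/
theorem base_g_left (j : Fin n2) {t : ℝ} (ht : t ≤ 3) :
    gg (v0 n1 n2 n3) j t = -t - 2 * (j : ℕ) := by
  unfold gg
  rw [Finset.sum_eq_zero]
  · simp only [v0]; ring
  · intro k _
    rw [relu_of_nonpos, mul_zero]
    simp only [v0]
    have : (0 : ℝ) ≤ (k : ℕ) * (4 * n2 + 4) := by positivity
    linarith

/-- Layer three at the base point, left region. -/
theorem base_h_left (r : Fin n3) (i : ℕ) (hi : i ≤ n2) {t : ℝ} (h1 : -(2 * (i : ℝ)) ≤ t)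
    (h2 : t ≤ 2 - 2 * i) :
    hh (v0 n1 n2 n3) r t = (-1) ^ i * (t - (1 - 2 * i)) - (r : ℕ) / n3 := by
  have hi0 : (0 : ℝ) ≤ i := by positivity
  have e : ∀ j : Fin n2, (v0 n1 n2 n3) (.a3 r j) * relu (gg (v0 n1 n2 n3) j t) =
      2 * (2 * (-1 : ℝ) ^ (j : ℕ) * relu ((-t / 2) - (j : ℕ))) := by
    intro j
    rw [base_g_left j (by linarith)]
    have : -t - 2 * ((j : ℕ) : ℝ) = 2 * ((-t / 2) - (j : ℕ)) := by ring
    rw [this, relu_mul (by norm_num)]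
    simp only [v0]
    ring
  unfold hh
  rw [Finset.sum_congr rfl fun j _ => e j, ← Finset.mul_sum]
  rcases i with _ | i
  · rw [Finset.sum_eq_zero]
    · simp only [v0]; push_cast; ring
    · intro j _
      have : (0 : ℝ) ≤ (j : ℕ) := by positivity
      push_cast at h1
      rw [relu_of_nonpos (by linarith), mul_zero]
  · push_cast at h1 h2
    rw [sum_relu_tri n2 i (by omega) _ (by linarith) (by linarith)]
    simp only [v0, tri]
    push_cast
    ring

/-- Layer two at the base point, right region, time `t = 3 + (4 n2 + 4) x`. -/
theorem base_g_right (j : Fin n2) (k : ℕ) (hk : k < n1) {x : ℝ} (h1 : (k : ℝ) ≤ x) (h2 : x ≤ k + 1) :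
    gg (v0 n1 n2 n3) j (3 + (4 * n2 + 4) * x) = -(3 + 2 * (j : ℕ)) + (4 + 2 * (j : ℕ)) * tri k x := by
  have hL : (0 : ℝ) < 4 * n2 + 4 := by positivity
  have hx : 0 ≤ x := le_trans (by positivity) h1
  set L : ℝ := 4 * n2 + 4 with hLdef
  set D : ℝ := 4 + 2 * (j : ℕ) with hD
  have e : ∀ k : Fin n1, (v0 n1 n2 n3) (.a2 j k) * relu ((3 + L * x) + (v0 n1 n2 n3) (.b1 k)) =
      (if (k : ℕ) = 0 then (L - D) * x else 0) + D * (2 * (-1 : ℝ) ^ (k : ℕ) * relu (x - (k : ℕ))) := by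
    intro k
    have : 3 + L * x + (v0 n1 n2 n3) (.b1 k) = L * (x - (k : ℕ)) := by
      simp only [v0, ← hLdef]; ring
    rw [this, relu_mul hL.le]
    simp only [v0, ← hLdef, ← hD]
    split_ifs with hk
    · rw [hk]
      simp only [Nat.cast_zero, sub_zero, relu_of_nonneg hx, pow_zero]
      field_simp
    · field_simp
      ring
  unfold gg
  rw [Finset.sum_congr rfl fun k _ => e k, Finset.sum_add_distrib, ← Finset.mul_sum,
    sum_relu_tri n1 k hk x h1 h2, Finset.sum_eq_single (⟨0, by omega⟩ : Fin n1)]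
  · simp only [v0, if_true]
    rw [hD]
    ring
  · intro b _ hb
    rw [if_neg]
    intro h
    exact hb (Fin.ext h)
  · simp

theorem base_hev (hn3 : 1 ≤ n3) (r : Fin n3) (i : Fin (n2 + 1)) :
    ∃ e τ₁ τ₂ τ₃ τ₄, HEv (v0 n1 n2 n3) r i e τ₁ τ₂ τ₃ τ₄ := by
  have hn : (0 : ℝ) < n3 := by exact_mod_cast hn3
  have hr0 : (0 : ℝ) ≤ (r : ℕ) / n3 := by positivity
  have hr1 : ((r : ℕ) : ℝ) / n3 < 1 := by
    rw [div_lt_one hn]; exact_mod_cast r.2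
  have hi : (i : ℕ) ≤ n2 := Nat.lt_succ_iff.1 i.2
  have hi0 : (0 : ℝ) ≤ (i : ℕ) := by positivity
  obtain ⟨s, hs⟩ : ∃ s : ℝ, s = (-1) ^ (i : ℕ) := ⟨_, rfl⟩
  have hs1 : s = 1 ∨ s = -1 := by rw [hs]; exact neg_one_pow_eq_or ℝ _
  have hs0 : s ≠ 0 := by rcases hs1 with h | h <;> rw [h] <;> norm_num
  have hss : s * s = 1 := by rcases hs1 with h | h <;> rw [h] <;> norm_num
  set z : ℝ := 1 - 2 * (i : ℕ) + s * ((r : ℕ) / n3) with hz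
  have hz1 : -(2 * ((i : ℕ) : ℝ)) < z := by
    rcases hs1 with h | h <;> rw [hz, h] <;> linarith
  have hz2 : z < 2 - 2 * ((i : ℕ) : ℝ) := by
    rcases hs1 with h | h <;> rw [hz, h] <;> linarith
  have hform : ∀ r' : Fin n3, ∀ t, -(2 * ((i : ℕ) : ℝ)) ≤ t → t ≤ 2 - 2 * ((i : ℕ) : ℝ) →
      hh (v0 n1 n2 n3) r' t = s * (t - z) + ((r : ℕ) / n3 - (r' : ℕ) / n3) := by
    intro r' t h1 h2
    rw [base_h_left r' i hi h1 h2, ← hs, hz]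
    linear_combination ((r : ℕ) / n3 : ℝ) * hss
  refine ⟨fun r' => 0 < hh (v0 n1 n2 n3) r' z, ?_⟩
  unfold HEv
  refine ev_from hs0 (z := z) ?_
  have hother : ∀ᶠ t in 𝓝 z, ∀ r', r' ≠ r → Sg (0 < hh (v0 n1 n2 n3) r' z) (hh (v0 n1 n2 n3) r' t) := by
    refine eventually_all.2 fun r' => ?_
    by_cases hr' : r' = r
    · exact Eventually.of_forall fun t h => absurd hr' h
    · have hne : hh (v0 n1 n2 n3) r' z ≠ 0 := by
        rw [hform r' z hz1.le hz2.le, sub_self, mul_zero, zero_add]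
        intro h
        apply hr'
        have h' : ((r : ℕ) : ℝ) = (r' : ℕ) := by
          field_simp at h; linarith
        exact Fin.ext (by exact_mod_cast h'.symm)
      have : Sg (0 < hh (v0 n1 n2 n3) r' z) (hh (v0 n1 n2 n3) r' z) :=
        ⟨id, fun h => lt_of_le_of_ne (not_lt.1 h) hne⟩
      filter_upwards [Sg.eventually (hh_cont _ r') this] with t ht _ using ht
  filter_upwards [hother, lt_mem_nhds hz1, gt_mem_nhds hz2] with t ho h1 h2
  have hpat : ∀ b : Prop, Sg b (s * (t - z)) →
      Pat (v0 n1 n2 n3) (fun _ => False) (fun j => (j : ℕ) < i)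
        (Function.update (fun r' => 0 < hh (v0 n1 n2 n3) r' z) r b) t := by
    intro b hb
    refine ⟨fun k => ⟨False.elim, fun _ => ?_⟩, fun j => ⟨fun hj => ?_, fun hj => ?_⟩, fun r' => ?_⟩
    · simp only [v0]
      have : (0 : ℝ) ≤ (k : ℕ) * (4 * n2 + 4) := by positivity
      linarith
    · rw [base_g_left j (by linarith)]
      have : ((j : ℕ) : ℝ) + 1 ≤ (i : ℕ) := by exact_mod_cast hj
      linarith
    · rw [base_g_left j (by linarith)]
      have : ((i : ℕ) : ℝ) ≤ (j : ℕ) := by exact_mod_cast not_lt.1 hj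
      linarith
    · by_cases hr' : r' = r
      · subst hr'
        rw [Function.update_self, hform _ t h1.le h2.le, sub_self, add_zero]
        exact hb
      · rw [Function.update_of_ne hr']
        exact ho r' hr'
  exact ⟨fun h => hpat _ ⟨False.elim, fun _ => h⟩, fun h => hpat _ ⟨fun _ => h, fun h' => absurd trivial h'⟩⟩

theorem base_gev (hn3 : 1 ≤ n3) (j : Fin n2) (k : Fin n1) :
    ∃ e τ₁ τ₂ τ₃ τ₄, GEv (v0 n1 n2 n3) j k e τ₁ τ₂ τ₃ τ₄ := by
  have hn : (0 : ℝ) < n3 := by exact_mod_cast hn3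
  have hL : (0 : ℝ) < 4 * n2 + 4 := by positivity
  obtain ⟨s, hs⟩ : ∃ s : ℝ, s = (-1) ^ (k : ℕ) := ⟨_, rfl⟩
  have hs1 : s = 1 ∨ s = -1 := by rw [hs]; exact neg_one_pow_eq_or ℝ _
  have hs0 : s ≠ 0 := by rcases hs1 with h | h <;> rw [h] <;> norm_num
  have hss : s * s = 1 := by rcases hs1 with h | h <;> rw [h] <;> norm_num
  have hD : (0 : ℝ) < 4 + 2 * (j : ℕ) := by positivity
  obtain ⟨θ, hθ⟩ : ∃ θ : ℝ, θ = (3 + 2 * (j : ℕ)) / (4 + 2 * (j : ℕ)) := ⟨_, rfl⟩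
  have hDθ : (4 + 2 * ((j : ℕ) : ℝ)) * θ = 3 + 2 * (j : ℕ) := by rw [hθ]; field_simp
  have hθ1 : θ < 1 := by rw [hθ, div_lt_one hD]; linarith
  have hθ2 : 1 / 2 < θ := by
    have : (0 : ℝ) ≤ (j : ℕ) := by positivity
    rw [hθ, lt_div_iff₀ hD]; linarith
  have hk0 : (0 : ℝ) ≤ (k : ℕ) := by positivity
  set x0 : ℝ := (k : ℕ) + s * (θ - (1 - s) / 2) with hx0
  have hx1 : ((k : ℕ) : ℝ) < x0 := by
    rcases hs1 with h | h <;> rw [hx0, h] <;> linarith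
  have hx2 : x0 < (k : ℕ) + 1 := by
    rcases hs1 with h | h <;> rw [hx0, h] <;> linarith
  have hx3 : 1 / 2 < x0 := by
    rcases Nat.eq_zero_or_pos (k : ℕ) with h | h
    · have : s = 1 := by rw [hs, h, pow_zero]
      rw [hx0, this]; linarith
    · have : (1 : ℝ) ≤ (k : ℕ) := by exact_mod_cast h
      linarith
  have htri : ∀ x, tri k x = s * (x - x0) + θ := by
    intro x
    unfold tri
    rw [← hs, hx0]
    linear_combination (θ - (1 - s) / 2) * hss
  set L : ℝ := 4 * n2 + 4 with hLdef
  set z : ℝ := 3 + L * x0 with hz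
  have hform : ∀ j' : Fin n2, ∀ t, 3 + L * (k : ℕ) ≤ t → t ≤ 3 + L * ((k : ℕ) + 1) →
      gg (v0 n1 n2 n3) j' t = (4 + 2 * (j' : ℕ)) * (s * (t - z) / L) +
        (-(3 + 2 * (j' : ℕ)) + (4 + 2 * (j' : ℕ)) * θ) := by
    intro j' t h1 h2
    obtain ⟨x, hx⟩ : ∃ x, x = (t - 3) / L := ⟨_, rfl⟩
    have htx : t = 3 + L * x := by rw [hx]; field_simp; ring
    have h1' : ((k : ℕ) : ℝ) ≤ x := le_of_mul_le_mul_left (by linarith) hL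
    have h2' : x ≤ (k : ℕ) + 1 := le_of_mul_le_mul_left (by linarith) hL
    have := base_g_right (n1 := n1) (n3 := n3) j' k k.2 h1' h2'
    rw [htx, this, htri, hz]
    field_simp
    ring
  have hz1 : 3 + L * (k : ℕ) < z := by rw [hz]; gcongr
  have hz2 : z < 3 + L * ((k : ℕ) + 1) := by rw [hz]; gcongr
  have hgz : ∀ j', gg (v0 n1 n2 n3) j' z = -(3 + 2 * (j' : ℕ)) + (4 + 2 * (j' : ℕ)) * θ := by
    intro j'
    rw [hform j' z hz1.le hz2.le]; simp
  refine ⟨fun j' => 0 < gg (v0 n1 n2 n3) j' z, ?_⟩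
  unfold GEv
  refine ev_from hs0 (z := z) ?_
  have hother : ∀ᶠ t in 𝓝 z, ∀ j', j' ≠ j → Sg (0 < gg (v0 n1 n2 n3) j' z) (gg (v0 n1 n2 n3) j' t) := by
    refine eventually_all.2 fun j' => ?_
    by_cases hj' : j' = j
    · exact Eventually.of_forall fun t h => absurd hj' h
    · have hne : gg (v0 n1 n2 n3) j' z ≠ 0 := by
        rw [hgz]
        intro h
        apply hj'
        have h' : (((j' : ℕ) : ℝ) - (j : ℕ)) * (1 - θ) = 0 := by linear_combination (-1/2) * h + (1/2) * hDθ
        rcases mul_eq_zero.1 h' with h' | h'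
        · exact Fin.ext (by exact_mod_cast sub_eq_zero.1 h')
        · linarith
      have : Sg (0 < gg (v0 n1 n2 n3) j' z) (gg (v0 n1 n2 n3) j' z) :=
        ⟨id, fun h => lt_of_le_of_ne (not_lt.1 h) hne⟩
      filter_upwards [Sg.eventually (gg_cont _ j') this] with t ht _ using ht
  have hpos : ∀ᶠ t in 𝓝 z, ∀ r, Sg True (hh (v0 n1 n2 n3) r t) := by
    refine eventually_all.2 fun r => Sg.eventually (hh_cont _ r) ⟨fun _ => ?_, fun h => absurd trivial h⟩
    have hr1 : ((r : ℕ) : ℝ) / n3 < 1 := by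
      rw [div_lt_one hn]; exact_mod_cast r.2
    have hsum : -(2 * (n2 : ℝ)) ≤ ∑ j', (v0 n1 n2 n3) (.a3 r j') * relu (gg (v0 n1 n2 n3) j' z) := by
      have : ∀ j' ∈ (Finset.univ : Finset (Fin n2)),
          (-2 : ℝ) ≤ (v0 n1 n2 n3) (.a3 r j') * relu (gg (v0 n1 n2 n3) j' z) := by
        intro j' _
        have hle : relu (gg (v0 n1 n2 n3) j' z) ≤ 1 := by
          unfold relu
          refine max_le ?_ zero_le_one
          rw [hgz]
          have : (4 + 2 * ((j' : ℕ) : ℝ)) * θ ≤ (4 + 2 * ((j' : ℕ) : ℝ)) * 1 := by gcongr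
          linarith
        have hge : 0 ≤ relu (gg (v0 n1 n2 n3) j' z) := le_max_right _ _
        simp only [v0]
        rcases neg_one_pow_eq_or ℝ (j' : ℕ) with h | h <;> rw [h] <;> linarith
      have := Finset.card_nsmul_le_sum _ _ _ this
      simp at this
      linarith
    unfold hh
    simp only [v0] at hsum ⊢
    have : L * (1 / 2) < L * x0 := by gcongr
    rw [hz]
    rw [hz] at hsum
    linarith
  filter_upwards [hother, hpos, lt_mem_nhds hz1, gt_mem_nhds hz2] with t ho hp h1 h2
  have hpat : ∀ b : Prop, Sg b (s * (t - z)) →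
      Pat (v0 n1 n2 n3) (fun k' => k' ≤ k)
        (Function.update (fun j' => 0 < gg (v0 n1 n2 n3) j' z) j b) (fun _ => True) t := by
    intro b hb
    refine ⟨fun k' => ⟨fun hk => ?_, fun hk => ?_⟩, fun j' => ?_, hp⟩
    · simp only [v0]
      have : ((k' : ℕ) : ℝ) ≤ (k : ℕ) := by exact_mod_cast hk
      have : ((k' : ℕ) : ℝ) * L ≤ (k : ℕ) * L := by gcongr
      linarith
    · simp only [v0]
      have : ((k : ℕ) : ℝ) + 1 ≤ (k' : ℕ) := by exact_mod_cast not_le.1 hk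
      have : (((k : ℕ) : ℝ) + 1) * L ≤ (k' : ℕ) * L := by gcongr
      linarith
    · by_cases hj' : j' = j
      · subst hj'
        have : -(3 + 2 * ((j' : ℕ) : ℝ)) + (4 + 2 * ((j' : ℕ) : ℝ)) * θ = 0 := by linarith
        rw [Function.update_self, hform _ t h1.le h2.le, this, add_zero]
        exact ⟨fun h => mul_pos hD (div_pos (hb.1 h) hL),
          fun h => mul_neg_of_pos_of_neg hD (div_neg_of_neg_of_pos (hb.2 h) hL)⟩
      · rw [Function.update_of_ne hj']
        exact ho j' hj'
  exact ⟨fun h => hpat _ ⟨False.elim, fun _ => h⟩, fun h => hpat _ ⟨fun _ => h, fun h' => absurd trivial h'⟩⟩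

theorem good_eventually (hn3 : 1 ≤ n3) : ∀ᶠ v in 𝓝 (v0 n1 n2 n3), Good v := by
  have hn : (0 : ℝ) < n3 := by exact_mod_cast hn3
  have hne : ∀ {F : (PIdx3 n1 n2 n3 → ℝ) → ℝ}, Continuous F → F (v0 n1 n2 n3) ≠ 0 →
      ∀ᶠ v in 𝓝 (v0 n1 n2 n3), F v ≠ 0 := fun hF h => hF.continuousAt.eventually_ne h
  have hpow : ∀ i : ℕ, (-1 : ℝ) ^ i ≠ 0 := fun i => pow_ne_zero _ (by norm_num)
  have h1 : ∀ᶠ v in 𝓝 (v0 n1 n2 n3), ∀ r, v (.a4 r) ≠ 0 :=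
    eventually_all.2 fun r => hne (by fun_prop) (by simp [v0])
  have h2 : ∀ᶠ v in 𝓝 (v0 n1 n2 n3), ∀ r j, v (.a3 r j) ≠ 0 :=
    eventually_all.2 fun r => eventually_all.2 fun j => hne (by fun_prop) (by simp [v0])
  have h3 : ∀ᶠ v in 𝓝 (v0 n1 n2 n3), ∀ j k, v (.a2 j k) ≠ 0 := by
    refine eventually_all.2 fun j => eventually_all.2 fun k => hne (by fun_prop) ?_
    have hq : (0 : ℝ) < (4 + 2 * (j : ℕ)) / (4 * n2 + 4) := by positivity
    simp only [v0]
    split_ifs with h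
    · rw [h, pow_zero]; linarith
    · rw [zero_add]
      exact mul_ne_zero (mul_ne_zero two_ne_zero (hpow _)) hq.ne'
  have h4 : ∀ᶠ v in 𝓝 (v0 n1 n2 n3), ∀ j, ∑ r, v (.a4 r) * v (.a3 r j) ≠ 0 := by
    refine eventually_all.2 fun j => hne (by fun_prop) ?_
    simp only [v0]
    simp
    omega
  have h5 : ∀ᶠ v in 𝓝 (v0 n1 n2 n3), ∀ r, ∀ i : Fin (n2 + 1),
      ∃ e τ₁ τ₂ τ₃ τ₄, HEv v r i e τ₁ τ₂ τ₃ τ₄ := by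
    refine eventually_all.2 fun r => eventually_all.2 fun i => ?_
    obtain ⟨e, τ₁, τ₂, τ₃, τ₄, a, b, c, d⟩ := base_hev (n1 := n1) hn3 r i
    filter_upwards [(c _ (.inl rfl)).eventually, (c _ (.inr rfl)).eventually,
      (d _ (.inl rfl)).eventually, (d _ (.inr rfl)).eventually] with v c1 c2 d1 d2
    refine ⟨e, τ₁, τ₂, τ₃, τ₄, a, b, ?_, ?_⟩
    · rintro τ (rfl | rfl) <;> assumption
    · rintro τ (rfl | rfl) <;> assumption
  have h6 : ∀ᶠ v in 𝓝 (v0 n1 n2 n3), ∀ j k,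
      ∃ e τ₁ τ₂ τ₃ τ₄, GEv v j k e τ₁ τ₂ τ₃ τ₄ := by
    refine eventually_all.2 fun j => eventually_all.2 fun k => ?_
    obtain ⟨e, τ₁, τ₂, τ₃, τ₄, a, b, c, d⟩ := base_gev (n1 := n1) hn3 j k
    filter_upwards [(c _ (.inl rfl)).eventually, (c _ (.inr rfl)).eventually,
      (d _ (.inl rfl)).eventually, (d _ (.inr rfl)).eventually] with v c1 c2 d1 d2
    refine ⟨e, τ₁, τ₂, τ₃, τ₄, a, b, ?_, ?_⟩
    · rintro τ (rfl | rfl) <;> assumption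
    · rintro τ (rfl | rfl) <;> assumption
  filter_upwards [h1, h2, h3, h4, h5, h6] with v a b c d e f
  exact ⟨a, b, c, d, e, f⟩

end base

theorem finite_PIdx3 (n1 n2 n3 : ℕ) : Finite (PIdx3 n1 n2 n3) := by
  let g : PIdx3 n1 n2 n3 → (Unit ⊕ Unit ⊕ Fin n3 ⊕ (Fin n3 × Fin n2)) ⊕ (Fin n2 × Fin n1) ⊕
      Fin n1 ⊕ Fin n2 ⊕ Fin n3 := fun
    | .c4 => .inl (.inl ())
    | .b4 => .inl (.inr (.inl ()))
    | .a4 r => .inl (.inr (.inr (.inl r)))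
    | .a3 r j => .inl (.inr (.inr (.inr (r, j))))
    | .a2 j k => .inr (.inl (j, k))
    | .b1 k => .inr (.inr (.inl k))
    | .b2 j => .inr (.inr (.inr (.inl j)))
    | .b3 r => .inr (.inr (.inr (.inr r)))
  refine Finite.of_injective g ?_
  intro a b h
  cases a <;> cases b <;> simp_all [g]

theorem part_two (n1 n2 n3 : ℕ) (hn2 : 1 ≤ n2) (hn3 : 1 ≤ n3) :
    ∃ f : ℝ → ℝ, IsReLU3 n1 n2 n3 f ∧ ∀ i : PIdx3 n1 n2 n3,
      ¬ ∃ p : NParams3 n1 n2 n3, p.valid ∧ p.get i = 0 ∧ ∀ t, f t = p.fn t := by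
  classical
  have := finite_PIdx3 n1 n2 n3
  have := Fintype.ofFinite (PIdx3 n1 n2 n3)
  obtain ⟨x, hx⟩ := exists_algInd (PIdx3 n1 n2 n3)
  obtain ⟨ε, hε, hgood⟩ := Metric.eventually_nhds_iff.1 (good_eventually (n1 := n1) (n2 := n2) hn3)
  have hq : ∀ i, ∃ q : ℚ, v0 n1 n2 n3 i - x i - ε < q ∧ (q : ℝ) < v0 n1 n2 n3 i - x i + ε := fun i =>
    exists_rat_btwn (by linarith)
  choose q hq1 hq2 using hq
  have hv := hgood (y := fun i => x i + q i) (by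
    rw [dist_pi_lt_iff hε]
    intro i
    rw [Real.dist_eq, abs_lt]
    constructor
    · linarith [hq1 i]
    · linarith [hq2 i])
  refine ⟨_, ff_isReLU3 (fun i => x i + q i), ?_⟩
  rintro i ⟨p, hp, hpi, hpf⟩
  let K := IntermediateField.adjoin ℚ (Set.range fun i' : {i' // i' ≠ i} => p.get i')
  have hget : ∀ i', p.get i' ∈ K := by
    intro i'
    by_cases h : i' = i
    · rw [h, hpi]; exact zero_mem K
    · exact IntermediateField.subset_adjoin _ _ ⟨⟨i', h⟩, rfl⟩
  have hmem := recover (K := K) hn2 hn3 hv (fun t => by rw [hpf]; exact fn_mem p hp K hget t)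
  have hx' : ∀ i', x i' ∈ K := by
    intro i'
    have := sub_mem (hmem i') (K.algebraMap_mem (q i'))
    simpa using this
  have hcard := card_le_of_mem_adjoin x hx (fun i' : {i' // i' ≠ i} => p.get i') hx'
  exact absurd hcard (not_le.2 (Fintype.card_subtype_lt (x := i) (by simp)))

/-- (i) every `f₄ ∈ Y_{n₁,n₂,n₃}` admits the normalized representation,
and (ii) the real parameters of the normalized model are independent: fixing any one of
them to be zero yields a proper subclass of `Y_{n₁,n₂,n₃}`. -/
theorem three_layer_parameter_independence (n1 n2 n3 : ℕ)
    (hn1 : 1 ≤ n1) (hn2 : 1 ≤ n2) (hn3 : 1 ≤ n3) :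
    (∀ f : ℝ → ℝ, IsReLU3 n1 n2 n3 f →
      ∃ p : NParams3 n1 n2 n3, p.valid ∧ ∀ t, f t = p.fn t) ∧
    (∀ (i : PIdx3 n1 n2 n3),
      {f : ℝ → ℝ | ∃ p : NParams3 n1 n2 n3, p.valid ∧ p.get i = 0 ∧ ∀ t, f t = p.fn t}
        ⊂ {f : ℝ → ℝ | IsReLU3 n1 n2 n3 f}) := by
  refine ⟨part_one n1 n2 n3, fun i => ?_⟩
  rw [Set.ssubset_iff_subset_ne]
  constructor
  · rintro f ⟨p, -, -, hf⟩
    have : f = p.fn := funext hf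
    rw [this]
    exact fn_isReLU3 p
  · intro h
    obtain ⟨f, hf, hno⟩ := part_two n1 n2 n3 hn2 hn3
    have : f ∈ {f : ℝ → ℝ | IsReLU3 n1 n2 n3 f} := hf
    rw [← h] at this
    exact hno i this
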